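/- Let k ≥ 1 and n ≥ k + 2, and let e_n denote the last standard basis vector of ℝ^n. Let s_1, …, s_l be (k−1)-simplices contained in the hyperplane {x ∈ ℝ^n : ⟨x, e_n⟩ = 0}, and let F_1, …, F_l ∈ ℝ^n be arbitrary forces. If the finite system of forces F = Σ_{i=1}^{l} F_i μ_{s_i} is in equilibrium, then F = B + F^h, where B is a finite sum of k-beams with symmetric coefficient matrices structural for their simplices, and F^h is a finite system of forces in equilibrium whose simplices and whose force vectors all lie in the hyperplane {x : ⟨x, e_n⟩ = 0}. -/

import Mathlib

open MeasureTheory Matrix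
open scoped RealInnerProductSpace

noncomputable section

abbrev Euc (n : ℕ) : Type := EuclideanSpace ℝ (Fin n)

/-- The action of an `n × n` real matrix on a vector of `ℝⁿ`. -/
def matVec {n : ℕ} (A : Matrix (Fin n) (Fin n) ℝ) (v : Euc n) : Euc n :=
  Matrix.toEuclideanLin A v

/-- `wedge v w = v wᵀ − w vᵀ`. -/
def wedge {n : ℕ} (v w : Euc n) : Matrix (Fin n) (Fin n) ℝ :=
  Matrix.of fun p q => v p * w q - w p * v q

/-- `rankOne v = v vᵀ`. -/
def rankOne {n : ℕ} (v : Euc n) : Matrix (Fin n) (Fin n) ℝ :=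
  Matrix.of fun p q => v p * v q

/-- The (closed) simplex spanned by a family of points: the convex hull of its range. -/
def simplexSet {n : ℕ} {ι : Type*} (b : ι → Euc n) : Set (Euc n) :=
  convexHull ℝ (Set.range b)

/-- The barycenter of a finite family of points. -/
def bary {n : ℕ} {ι : Type*} [Fintype ι] (b : ι → Euc n) : Euc n :=
  (Fintype.card ι : ℝ)⁻¹ • ∑ i, b i

/-- The vertices of the face of the simplex `b` opposite to the vertex `i`. -/
def face {n K : ℕ} (b : Fin K → Euc n) (i : Fin K) : {j : Fin K // j ≠ i} → Euc n :=
  fun j => b j.1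

/-- The vector measure `Σᵢ Fᵢ μ_{sᵢ}` of a finite system of forces, as an
`ℝⁿ`-valued set function; here `d` is the Hausdorff dimension of the simplices. -/
def sys {n l : ℕ} {ι : Type*} (d : ℝ) (s : Fin l → ι → Euc n) (F : Fin l → Euc n) :
    Set (Euc n) → Euc n :=
  fun S => ∑ i, (μH[d] (S ∩ simplexSet (s i))).toReal • F i

/-- A finite system of forces is in equilibrium: zero net force and zero net torque. -/
def equil {n l : ℕ} {ι : Type*} [Fintype ι] (d : ℝ) (s : Fin l → ι → Euc n)
    (F : Fin l → Euc n) : Prop :=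
  (∑ i, (μH[d] (simplexSet (s i))).toReal • F i = 0) ∧
  (∑ i, (μH[d] (simplexSet (s i))).toReal • wedge (bary (s i)) (F i) = 0)

/-- `v` is the outward unit conormal of the face of `b` opposite vertex `i`. -/
def IsConormal {n K : ℕ} (b : Fin K → Euc n) (i : Fin K) (v : Euc n) : Prop :=
  v ∈ vectorSpan ℝ (Set.range b) ∧ ‖v‖ = 1 ∧
    (∀ w ∈ vectorSpan ℝ (Set.range (face b i)), ⟪v, w⟫ = 0) ∧
    ⟪v, b i - bary (face b i)⟫ < 0

open scoped Classical in
/-- The outward unit conormal of the face of `b` opposite vertex `i`. -/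
def conormal {n K : ℕ} (b : Fin K → Euc n) (i : Fin K) : Euc n :=
  if h : ∃ v, IsConormal b i v then h.choose else 0

/-- A matrix is structural for a simplex if its range is contained in the
direction space of the simplex. -/
def Structural {n : ℕ} {ι : Type*} (A : Matrix (Fin n) (Fin n) ℝ) (b : ι → Euc n) : Prop :=
  ∀ v, matVec A v ∈ vectorSpan ℝ (Set.range b)

/-- The beam `A ⊗ Beam(τ)` of a simplex `τ` with `K` vertices (so of dimension `K − 1`,
with faces of dimension `K − 2`), as an `ℝⁿ`-valued set function. -/
def beam {n K : ℕ} (A : Matrix (Fin n) (Fin n) ℝ) (b : Fin K → Euc n) :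
    Set (Euc n) → Euc n :=
  fun S => ∑ i, (μH[(K : ℝ) - 2] (S ∩ simplexSet (face b i))).toReal • matVec A (conormal b i)

/-- `G` is a finite sum of beams over simplices with `K` vertices, with symmetric
coefficient matrices that are structural for their simplices. -/
def IsBeamSum {n : ℕ} (K : ℕ) (G : Set (Euc n) → Euc n) : Prop :=
  ∃ (m : ℕ) (τ : Fin m → Fin K → Euc n) (A : Fin m → Matrix (Fin n) (Fin n) ℝ),
    (∀ j, AffineIndependent ℝ (τ j)) ∧ (∀ j, (A j).IsSymm) ∧
    (∀ j, Structural (A j) (τ j)) ∧ (G = fun S => ∑ j, beam (A j) (τ j) S)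

/-!
The argument works modulo beams and modulo loads on simplices in `H` with forces in `H`, `H` being
the hyperplane or any other linear subspace. A beam over the join of a simplex `s` with a point `t`,
with coefficient matrix proportional to `(t - s i) (t - s i)ᵀ`, is supported on two faces of the
join: it slides the uniform load in the direction `t - s i` from `s` to the simplex obtained by
moving the vertex `s i` to `t`. The total force is preserved because both faces have the same
projection along the edge, so that `|⟪conormal, t - s i⟫|` times the mass is the same for both.

Let `E s v` be the class of the load with total force `v` uniformly distributed over `s`. Sliding
along edges to an apex `e ∉ H` gives, for `s` in `H`, that `E s e = E (update s i e) (e - s i)`.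
Exchanging two vertices of `s` and sliding between them then forces `E (update s i e) v`, for
`v ∈ H`, to be independent of `s` and of `i`. Hence `E s e = q - D (∑ i, s i)` with `D` linear, so
that the classes of the forces along `e` cancel by the balance of forces and of torques.
-/

section LinearAlgebra

variable {V Q : Type*} [AddCommGroup V] [Module ℝ V] [AddCommGroup Q] [Module ℝ Q]

theorem exists_forall_notMem_affineSubspace {𝒜 : Set (AffineSubspace ℝ V)} (hfin : 𝒜.Finite)
    (htop : ⊤ ∉ 𝒜) : ∃ y, ∀ A ∈ 𝒜, y ∉ A := by
  by_contra! hcover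
  choose! p hp using fun (A : AffineSubspace ℝ V) (hA : (A : Set V).Nonempty) => hA
  have hfin' : {A ∈ 𝒜 | (A : Set V).Nonempty}.Finite := hfin.subset (Set.sep_subset _ _)
  obtain ⟨A, hA, hindex⟩ : ∃ A ∈ hfin'.toFinset, A.direction.toAddSubgroup.FiniteIndex := by
    refine AddSubgroup.exists_finiteIndex_of_leftCoset_cover
      (g := p) (Set.eq_univ_of_forall fun y => ?_)
    obtain ⟨A, hA, hy⟩ := hcover y
    refine Set.mem_iUnion₂.2 ⟨A, hfin'.mem_toFinset.2 ⟨hA, y, hy⟩, y - p A, ?_, by simp⟩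
    exact A.vsub_mem_direction hy (hp A ⟨y, hy⟩)
  obtain ⟨hA𝒜, hAne⟩ := hfin'.mem_toFinset.1 hA
  have hproper : A.direction ≠ ⊤ := fun h =>
    htop ((AffineSubspace.direction_eq_top_iff_of_nonempty hAne).1 h ▸ hA𝒜)
  have : Nontrivial (V ⧸ A.direction) := Submodule.Quotient.nontrivial_iff.2 hproper
  have : Infinite (V ⧸ A.direction) := Module.Free.infinite ℝ _
  have : Finite (V ⧸ A.direction) := AddSubgroup.finite_quotient_of_finiteIndex
  exact not_finite (V ⧸ A.direction)

variable {ι : Type*}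

/-- `s` is the family of vertices of a nondegenerate simplex contained in the subspace `H`. -/
structure IsSimplexIn (H : Submodule ℝ V) (s : ι → V) : Prop where
  affineIndependent : AffineIndependent ℝ s
  mem : ∀ i, s i ∈ H

namespace IsSimplexIn

open Function

variable {H : Submodule ℝ V} {s s' : ι → V}

theorem comp_perm (hs : IsSimplexIn H s) (σ : Equiv.Perm ι) : IsSimplexIn H (s ∘ σ) :=
  ⟨hs.affineIndependent.comp_embedding σ.toEmbedding, fun i => hs.mem (σ i)⟩

variable [DecidableEq ι]

theorem update (hs : IsSimplexIn H s) {i : ι} {y : V} (hy : y ∈ H)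
    (hspan : y ∉ affineSpan ℝ (s '' {x | x ≠ i})) : IsSimplexIn H (update s i y) where
  affineIndependent := hs.affineIndependent.affineIndependent_update_of_notMem_affineSpan hspan
  mem := (forall_update_iff s fun _ x => x ∈ H).2 ⟨hy, fun j _ => hs.mem j⟩

theorem exists_forall_update_add {S : Set (ι → V)} {C : Set V} (hS : S.Finite) (hC : C.Finite)
    (hSH : ∀ s ∈ S, IsSimplexIn H s) (hCH : C ⊆ H) (i : ι) :
    ∃ y ∈ H, ∀ s ∈ S, ∀ c ∈ C, IsSimplexIn H (Function.update s i (y + c)) := by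
  let A (x : (ι → V) × V) : AffineSubspace ℝ H :=
    (affineSpan ℝ (x.1 '' {j | j ≠ i})).comap
      (H.subtype.toAffineMap + AffineMap.const ℝ H x.2)
  obtain ⟨y, hy⟩ : ∃ y, ∀ B ∈ A '' S ×ˢ C, y ∉ B := by
    refine exists_forall_notMem_affineSubspace ((hS.prod hC).image A) ?_
    rintro ⟨⟨s, c⟩, ⟨hs, hc⟩, htop⟩
    have hvertex : (⟨s i - c, H.sub_mem ((hSH s hs).mem i) (hCH hc)⟩ : H) ∈ A (s, c) :=
      htop ▸ AffineSubspace.mem_top ℝ H _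
    exact (hSH s hs).affineIndependent.notMem_affineSpan_sdiff i {j | j ≠ i} (by
      simpa [A] using hvertex)
  refine ⟨y, y.2, fun s hs c hc => (hSH s hs).update (H.add_mem y.2 (hCH hc)) fun hmem => ?_⟩
  exact hy _ ⟨(s, c), ⟨hs, hc⟩, rfl⟩ (by simpa [A] using hmem)

theorem eq_of_forall_update_eq [Finite ι] {α : Type*} {φ : (ι → V) → α}
    (hφ : ∀ s i t, IsSimplexIn H s → IsSimplexIn H (Function.update s i t) →
      φ (Function.update s i t) = φ s)
    (hs : IsSimplexIn H s) (hs' : IsSimplexIn H s') : φ s = φ s' := by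
  cases nonempty_fintype ι
  suffices h : ∀ (A : Finset ι) (s s' : ι → V), IsSimplexIn H s → IsSimplexIn H s' →
      (∀ i ∉ A, s i = s' i) → φ s = φ s' from
    h Finset.univ s s' hs hs' (by simp)
  intro A
  induction A using Finset.induction_on with
  | empty => exact fun s s' _ _ h => congrArg φ (funext fun i => h i (by simp))
  | insert i A _ ih =>
    intro s s' hs hs' h
    obtain ⟨y, -, hy⟩ := exists_forall_update_add (S := {s, s'}) (C := {0}) (H := H)
      (Set.toFinite _) (Set.toFinite _) (by simp [hs, hs']) (by simp) i
    simp only [Set.mem_insert_iff, Set.mem_singleton_iff, forall_eq_or_imp, forall_eq,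
      add_zero] at hy
    rw [← hφ s i y hs hy.1, ← hφ s' i y hs' hy.2]
    refine ih _ _ hy.1 hy.2 fun j hj => ?_
    obtain rfl | hji := eq_or_ne j i
    · simp
    · simpa [hji] using h j (by simp [hji, hj])

end IsSimplexIn

section Cons

variable {k : ℕ} {s : Fin (k + 1) → V} {t : V}

theorem affineIndependent_of_cons (h : AffineIndependent ℝ (Fin.cons t s : Fin (k + 2) → V)) :
    AffineIndependent ℝ s :=
  h.comp_embedding (Fin.succEmb _)

theorem affineIndependent_cons_update (h : AffineIndependent ℝ (Fin.cons t s : Fin (k + 2) → V))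
    (i : Fin (k + 1)) :
    AffineIndependent ℝ (Fin.cons (s i) (Function.update s i t) : Fin (k + 2) → V) := by
  have hswap := Equiv.comp_swap_eq_update 0 i.succ (Fin.cons t s : Fin (k + 2) → V)
  rw [Fin.cons_zero, Fin.cons_succ, ← Fin.cons_update, Fin.update_cons_zero] at hswap
  exact hswap ▸ h.comp_embedding (Equiv.swap 0 i.succ).toEmbedding

theorem IsSimplexIn.affineIndependent_cons {H : Submodule ℝ V} (hs : IsSimplexIn H s)
    (ht : t ∉ H) : AffineIndependent ℝ (Fin.cons t s : Fin (k + 2) → V) := by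
  refine AffineIndependent.affineIndependent_of_notMem_span (i := 0) ?_ fun hspan => ht ?_
  · rw [← affineIndependent_equiv (finSuccAboveEquiv 0)]
    exact hs.affineIndependent
  · refine affineSpan_le (Q := H.toAffineSubspace) |>.2 ?_ hspan
    rintro _ ⟨j, hj, rfl⟩
    obtain ⟨i, rfl⟩ := Fin.exists_succ_eq.2 hj
    exact hs.mem i

end Cons

/-- The axioms satisfied by the class `E s v` of the load with total force `v` uniformly distributed
over the simplex `s`, when beams and loads on simplices in `H` with forces in `H` are disregarded.
`slide` is the effect of the beam over the simplex `Fin.cons t s` with coefficient matrix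
proportional to `(t - s i) (t - s i)ᵀ`. -/
structure IsLoadClass {k : ℕ} (H : Submodule ℝ V) (E : (Fin (k + 1) → V) → V →ₗ[ℝ] Q) : Prop where
  comp_perm : ∀ (s : Fin (k + 1) → V) (σ : Equiv.Perm (Fin (k + 1))), E (s ∘ σ) = E s
  slide : ∀ (s : Fin (k + 1) → V) (t : V) (i : Fin (k + 1)),
    AffineIndependent ℝ (Fin.cons t s : Fin (k + 2) → V) →
      E s (t - s i) = E (Function.update s i t) (t - s i)
  apply_eq_zero : ∀ (s : Fin (k + 1) → V) (v : V), IsSimplexIn H s → v ∈ H → E s v = 0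

namespace IsLoadClass

open Function

variable {k : ℕ} {H : Submodule ℝ V} {E : (Fin (k + 1) → V) → V →ₗ[ℝ] Q}
  {s s' : Fin (k + 1) → V} {e : V}

theorem apply_eq_apply_update_sub (hE : IsLoadClass H E) (hs : IsSimplexIn H s) (he : e ∉ H)
    (i : Fin (k + 1)) : E s e = E (update s i e) (e - s i) := by
  rw [← hE.slide s e i (hs.affineIndependent_cons he), map_sub,
    hE.apply_eq_zero s _ hs (hs.mem i), sub_zero]

/-- Here `T x y` replaces the vertices `j` and `i` of `s` by `x` and `y`, and `g x = E (T x e)`.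
Sliding along the edges at `e` and along the edge from `x` to `y` evaluates `g x y - g y x` and
`g x y + g y x` respectively, so `g x y` separates into a function of `x` and one of `y`. -/
theorem two_smul_apply_update_update (hE : IsLoadClass H E) (he : e ∉ H) {i j : Fin (k + 1)}
    (hij : i ≠ j) {x y : V} (hs : IsSimplexIn H (update (update s j x) i y)) :
    (2 : ℝ) • E (update (update s j x) i e) y =
      E (update (update s j x) i e) (e + x) + E (update (update s j y) i e) (y - e) := by
  have hswap : update (update s j x) i y ∘ Equiv.swap i j = update (update s j y) i x := by
    rw [update_comp_equiv, update_comp_equiv, Equiv.symm_swap, Equiv.swap_apply_left,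
      Equiv.swap_apply_right, Equiv.comp_swap_eq_update]
    ext l
    grind
  have hxy := hE.apply_eq_apply_update_sub hs he i
  have hyx := hE.apply_eq_apply_update_sub (hs.comp_perm (Equiv.swap i j)) he i
  rw [hE.comp_perm, hswap] at hyx
  have hslide : E (update (update s j x) i e) (y - x) = E (update (update s j y) i e) (y - x) := by
    have hslide := hE.slide (update (update s j x) i e) y j (by
      simpa using affineIndependent_cons_update (hs.affineIndependent_cons he) i)
    rwa [update_of_ne hij.symm, update_self, update_comm hij e y (update s j x),
      update_idem] at hslide
  have hforce := hxy.symm.trans hyx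
  simp only [update_idem, update_self, map_sub, map_add] at hforce hslide ⊢
  linear_combination (norm := module) hslide - hforce

theorem apply_update_update_eq (hE : IsLoadClass H E) (he : e ∉ H) {i j : Fin (k + 1)}
    (hij : i ≠ j) {x v : V} (hs : IsSimplexIn H s) (hx : IsSimplexIn H (update s j x))
    (hv : v ∈ H) : E (update (update s j x) i e) v = E (update s i e) v := by
  obtain ⟨y, -, hy⟩ := IsSimplexIn.exists_forall_update_add (S := {s, update s j x}) (C := {0, v})
    (H := H) (Set.toFinite _) (Set.toFinite _) (by simp [hs, hx])
    (by simp [Set.insert_subset_iff, hv]) i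
  simp only [Set.mem_insert_iff, Set.mem_singleton_iff, forall_eq_or_imp, forall_eq,
    add_zero] at hy
  obtain ⟨⟨hsy, hsyv⟩, hxy, hxyv⟩ := hy
  rw [← update_eq_self j s] at hsy hsyv
  refine smul_right_injective Q (two_ne_zero (α := ℝ)) ?_
  have hsplit (z : V) (hz : IsSimplexIn H (update (update s j z) i y))
      (hzv : IsSimplexIn H (update (update s j z) i (y + v))) :
      (2 : ℝ) • E (update (update s j z) i e) v =
        E (update (update s j (y + v)) i e) (y + v - e) -
          E (update (update s j y) i e) (y - e) := by
    have hyv := hE.two_smul_apply_update_update he hij hzv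
    rw [map_add] at hyv
    linear_combination (norm := module) hyv - hE.two_smul_apply_update_update he hij hz
  rw [← update_eq_self j s]
  simpa using (hsplit x hxy hxyv).trans (hsplit (s j) hsy hsyv).symm

theorem apply_update_eq (hE : IsLoadClass H E) (he : e ∉ H) (hs : IsSimplexIn H s)
    (hs' : IsSimplexIn H s') (i j : Fin (k + 1)) {v : V} (hv : v ∈ H) :
    E (update s i e) v = E (update s' j e) v := by
  have hindep : ∀ {s s'}, IsSimplexIn H s → IsSimplexIn H s' →
      E (update s i e) v = E (update s' i e) v := by
    refine IsSimplexIn.eq_of_forall_update_eq (φ := fun s => E (update s i e) v)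
      fun s j x hs hx => ?_
    obtain rfl | hij := eq_or_ne i j
    · rw [update_idem]
    · exact hE.apply_update_update_eq he hij hs hx hv
  have hswap : update s' j e = update (s' ∘ Equiv.swap i j) i e ∘ Equiv.swap i j := by
    rw [update_comp_equiv, comp_assoc, ← Equiv.coe_trans]
    simp
  rw [hswap, hE.comp_perm]
  exact hindep hs (hs'.comp_perm _)

theorem exists_apply_eq_sub (hE : IsLoadClass H E) (he : e ∉ H) :
    ∃ (q : Q) (D : V →ₗ[ℝ] Q), ∀ s, IsSimplexIn H s → E s e = q - D (∑ i, s i) := by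
  by_cases hex : ∃ s₀ : Fin (k + 1) → V, IsSimplexIn H s₀
  swap
  · exact ⟨0, 0, fun s hs => (hex ⟨s, hs⟩).elim⟩
  obtain ⟨s₀, hs₀⟩ := hex
  refine ⟨E s₀ e + E (update s₀ 0 e) (∑ i, s₀ i), E (update s₀ 0 e), fun s hs => ?_⟩
  rw [eq_sub_iff_add_eq]
  refine IsSimplexIn.eq_of_forall_update_eq (φ := fun s => E s e + E (update s₀ 0 e) (∑ i, s i))
    (fun s i t hs ht => ?_) hs hs₀
  have hsum : ∑ l, update s i t l = ∑ l, s l + (t - s i) := by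
    rw [Finset.sum_update_of_mem (Finset.mem_univ i),
      Finset.sum_eq_add_sum_sdiff_singleton_of_mem (Finset.mem_univ i) s]
    abel
  have hD : E (update s i e) (t - s i) = E (update s₀ 0 e) (t - s i) :=
    hE.apply_update_eq he hs hs₀ i 0
      (H.sub_mem (by simpa using ht.mem i) (hs.mem i))
  rw [hE.apply_eq_apply_update_sub ht he i, hE.apply_eq_apply_update_sub hs he i, hsum, map_add,
    ← hD, update_idem, update_self]
  simp only [map_sub]
  abel

theorem sum_smul_apply_eq_zero (hE : IsLoadClass H E) {α : Type*} [Fintype α]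
    {s : α → Fin (k + 1) → V} (hs : ∀ a, IsSimplexIn H (s a)) {c : α → ℝ} (hforce : ∑ a, c a = 0)
    (htorque : ∑ a, c a • ∑ i, s a i = 0) : ∑ a, c a • E (s a) e = 0 := by
  by_cases he : e ∈ H
  · simp [hE.apply_eq_zero _ _ (hs _) he]
  obtain ⟨q, D, hqD⟩ := hE.exists_apply_eq_sub he
  simp only [hqD _ (hs _), smul_sub, Finset.sum_sub_distrib, ← Finset.sum_smul, hforce, zero_smul,
    ← map_smul, ← map_sum, htorque, map_zero, sub_zero]

end IsLoadClass

end LinearAlgebra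

section ObliqueProjection

variable {E : Type*} [NormedAddCommGroup E] [InnerProductSpace ℝ E] {p q v : E}
  {U : Submodule ℝ E}

/-- The projection along `v` onto the orthogonal complement of `q`. It carries a face of a simplex
with edge `v` onto the face with unit normal `q`. -/
def obliqueProjection (q v : E) : E →ₗ[ℝ] E :=
  LinearMap.transvection (-⟪q, v⟫⁻¹ • innerₛₗ ℝ q) v

theorem obliqueProjection_apply (q v x : E) :
    obliqueProjection q v x = x - (⟪q, x⟫ / ⟪q, v⟫) • v := by
  simp only [obliqueProjection, LinearMap.transvection.apply, LinearMap.smul_apply,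
    innerₛₗ_apply_apply, smul_eq_mul]
  module

theorem obliqueProjection_self (hqv : ⟪q, v⟫ ≠ 0) : obliqueProjection q v v = 0 := by
  rw [obliqueProjection_apply, div_self hqv, one_smul, sub_self]

theorem obliqueProjection_eq_self {x : E} (hx : ⟪q, x⟫ = 0) : obliqueProjection q v x = x := by
  rw [obliqueProjection_apply, hx, zero_div, zero_smul, sub_zero]

theorem reflection_orthogonal_span_sub_apply (hp : ‖p‖ = 1) (hq : ‖q‖ = 1) (x : E) :
    (ℝ ∙ (q - p))ᗮ.reflection x = x - (⟪q - p, x⟫ / (1 - ⟪p, q⟫)) • (q - p) := by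
  have hnorm : ‖q - p‖ ^ 2 = 2 * (1 - ⟪p, q⟫) := by
    rw [norm_sub_sq_real, hp, hq, real_inner_comm]
    ring
  rw [Submodule.reflection_orthogonal_apply, Submodule.reflection_singleton_apply,
    RCLike.ofReal_real_eq_id, id, hnorm, ← Nat.cast_smul_eq_nsmul ℝ, smul_smul, neg_sub]
  congr 2
  rw [Nat.cast_ofNat, ← mul_div_assoc, mul_div_mul_left _ _ two_ne_zero]

theorem mem_of_mem_sup_span_singleton {w : E} (hpU : ∀ u ∈ U, ⟪p, u⟫ = 0) (hpv : ⟪p, v⟫ ≠ 0)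
    (hw : w ∈ U ⊔ ℝ ∙ v) (hpw : ⟪p, w⟫ = 0) : w ∈ U := by
  obtain ⟨u, hu, x, hx, rfl⟩ := Submodule.mem_sup.1 hw
  obtain ⟨c, rfl⟩ := Submodule.mem_span_singleton.1 hx
  rw [inner_add_right, hpU u hu, zero_add, inner_smul_right, mul_eq_zero] at hpw
  rw [hpw.resolve_right hpv, zero_smul, add_zero]
  exact hu

theorem reflection_obliqueProjection_apply (hp : ‖p‖ = 1) (hq : ‖q‖ = 1) (hqv : ⟪q, v⟫ ≠ 0) {x : E}
    (hpx : ⟪p, x⟫ = 0) :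
    (ℝ ∙ (q - p))ᗮ.reflection (obliqueProjection q v x) =
      x - (⟪q, x⟫ / ⟪q, v⟫) • (v + (⟪p, v⟫ / (1 - ⟪p, q⟫)) • (q - p)) := by
  have hinner : ⟪q - p, obliqueProjection q v x⟫ = ⟪q, x⟫ / ⟪q, v⟫ * ⟪p, v⟫ := by
    rw [obliqueProjection_apply, inner_sub_left, inner_sub_right, inner_sub_right,
      inner_smul_right, inner_smul_right, hpx]
    field
  rw [reflection_orthogonal_span_sub_apply hp hq, hinner, obliqueProjection_apply]
  module

/-- The reflection exchanging `p` and `q` turns the oblique projection into a transvection of `U`,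
whose determinant is immediate. -/
theorem obliqueProjection_comp_subtype (hp : ‖p‖ = 1) (hq : ‖q‖ = 1) (hpU : ∀ u ∈ U, ⟪p, u⟫ = 0)
    (hqv : ⟪q, v⟫ ≠ 0) (w : U) (hw : (w : E) = v + (⟪p, v⟫ / (1 - ⟪p, q⟫)) • (q - p)) :
    obliqueProjection q v ∘ₗ U.subtype =
      ((ℝ ∙ (q - p))ᗮ.reflection.symm.toLinearIsometry.comp U.subtypeₗᵢ).toLinearMap ∘ₗ
        LinearMap.transvection (-⟪q, v⟫⁻¹ • innerₛₗ ℝ q ∘ₗ U.subtype) w := by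
  refine LinearMap.ext fun u => (ℝ ∙ (q - p))ᗮ.reflection.eq_symm_apply.2 ?_
  refine (reflection_obliqueProjection_apply hp hq hqv (hpU u u.2)).trans ?_
  rw [← hw, LinearIsometry.coe_toLinearMap, Submodule.coe_subtypeₗᵢ, LinearMap.transvection.apply]
  simp only [LinearMap.smul_apply, LinearMap.comp_apply, innerₛₗ_apply_apply,
    Submodule.subtype_apply, Submodule.coe_add, Submodule.coe_smul, smul_eq_mul]
  module

theorem normDet_obliqueProjection [FiniteDimensional ℝ U] (hp : ‖p‖ = 1) (hq : ‖q‖ = 1)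
    (hpU : ∀ u ∈ U, ⟪p, u⟫ = 0) (hpUv : p ∈ U ⊔ ℝ ∙ v) (hqUv : q ∈ U ⊔ ℝ ∙ v)
    (hpv : ⟪p, v⟫ ≠ 0) (hqv : ⟪q, v⟫ ≠ 0) :
    (obliqueProjection q v ∘ₗ U.subtype).normDet = |⟪p, v⟫ / ⟪q, v⟫| := by
  obtain rfl | hne := eq_or_ne p q
  · have hid : obliqueProjection p v ∘ₗ U.subtype = U.subtypeₗᵢ.toLinearMap :=
      LinearMap.ext fun u => obliqueProjection_eq_self (hpU u u.2)
    rw [hid, LinearIsometry.normDet_eq_one, div_self hqv, abs_one]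
  have hinner : 1 - ⟪p, q⟫ ≠ 0 := fun h =>
    hne ((inner_eq_one_iff_of_norm_eq_one (𝕜 := ℝ) hp hq).1 (by linarith))
  let w : E := v + (⟪p, v⟫ / (1 - ⟪p, q⟫)) • (q - p)
  have hpw : ⟪p, w⟫ = 0 := by
    rw [inner_add_right, inner_smul_right, inner_sub_right, inner_self_eq_one_of_norm_eq_one hp]
    field
  have hqw : ⟪q, w⟫ = ⟪q, v⟫ + ⟪p, v⟫ := by
    rw [inner_add_right, inner_smul_right, inner_sub_right, inner_self_eq_one_of_norm_eq_one hq,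
      real_inner_comm p q]
    field
  have hwU : w ∈ U := mem_of_mem_sup_span_singleton hpU hpv (Submodule.add_mem _
    (Submodule.mem_sup_right (Submodule.mem_span_singleton_self v))
    (Submodule.smul_mem _ _ (Submodule.sub_mem _ hqUv hpUv))) hpw
  rw [obliqueProjection_comp_subtype hp hq hpU hqv ⟨w, hwU⟩ rfl,
    LinearMap.normDet_comp_of_finrank_eq _ _ rfl, LinearIsometry.normDet_eq_one, one_mul,
    LinearMap.normDet_eq_abs_det, LinearMap.transvection.det, ← abs_neg]
  simp only [LinearMap.smul_apply, LinearMap.comp_apply, innerₛₗ_apply_apply,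
    Submodule.subtype_apply, hqw, smul_eq_mul]
  congr 1
  field

end ObliqueProjection

section SimplexMass

open Function Module

variable {n k : ℕ}

theorem hausdorffMeasure_simplexSet_add_apply {ι U : Type*} [NormedAddCommGroup U]
    [InnerProductSpace ℝ U] [FiniteDimensional ℝ U] [MeasurableSpace U] [BorelSpace U] (x : Euc n)
    (f : U →ₗ[ℝ] Euc n) (w : ι → U) :
    μH[finrank ℝ U] (simplexSet fun i => x + f (w i)) =
      ENNReal.ofReal f.normDet * μH[finrank ℝ U] (convexHull ℝ (Set.range w)) := by
  have himage : simplexSet (fun i => x + f (w i)) =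
      (x + ·) '' (f '' convexHull ℝ (Set.range w)) := by
    rw [f.image_convexHull, ← Set.range_comp]
    refine (congrArg (convexHull ℝ) (Set.range_comp (x + ·) (f ∘ w))).trans ?_
    exact (((AffineEquiv.constVAdd ℝ (Euc n) x).toAffineMap).image_convexHull _).symm
  rw [himage, (isometry_add_left x).hausdorffMeasure_image (Or.inl (Nat.cast_nonneg _)),
    f.hausdorffMeasure_image]

/-- The vertices of the simplex `s` seen from its vertex `s i`, as elements of the direction space
of `s`. -/
def edgeVector {ι : Type*} (s : ι → Euc n) (i j : ι) : vectorSpan ℝ (Set.range s) :=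
  ⟨s j - s i, vsub_mem_vectorSpan ℝ (Set.mem_range_self j) (Set.mem_range_self i)⟩

/-- The total mass `H^k(s)` of the measure `μ_s` of a `k`-simplex `s`. -/
def simplexMass (s : Fin (k + 1) → Euc n) : ℝ :=
  (μH[(k : ℝ)] (simplexSet s)).toReal

variable {s : Fin (k + 1) → Euc n}

theorem hausdorffMeasure_simplexSet (hs : AffineIndependent ℝ s) (i : Fin (k + 1)) :
    μH[(k : ℝ)] (simplexSet s) = μH[finrank ℝ (vectorSpan ℝ (Set.range s))]
      (convexHull ℝ (Set.range (edgeVector s i))) := by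
  have hmeasure := hausdorffMeasure_simplexSet_add_apply (s i)
    (vectorSpan ℝ (Set.range s)).subtypeₗᵢ.toLinearMap (edgeVector s i)
  rw [LinearIsometry.normDet_eq_one, ENNReal.ofReal_one, one_mul] at hmeasure
  rw [← hmeasure, hs.finrank_vectorSpan (Fintype.card_fin _)]
  simp only [edgeVector, LinearIsometry.coe_toLinearMap, Submodule.coe_subtypeₗᵢ,
    Submodule.subtype_apply, add_sub_cancel]

theorem affineIndependent_edgeVector (hs : AffineIndependent ℝ s) (i : Fin (k + 1)) :
    AffineIndependent ℝ (edgeVector s i) := by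
  rw [affineIndependent_iff_linearIndependent_vsub ℝ _ i] at hs ⊢
  refine LinearIndependent.of_comp (vectorSpan ℝ (Set.range s)).subtype ?_
  convert hs using 1
  funext j
  simp [edgeVector]

theorem simplexMass_pos (hs : AffineIndependent ℝ s) : 0 < simplexMass s := by
  rw [simplexMass, hausdorffMeasure_simplexSet hs 0]
  refine ENNReal.toReal_pos (Measure.measure_pos_of_nonempty_interior _ ?_).ne' ?_
  · rw [interior_convexHull_nonempty_iff_affineSpan_eq_top,
      (affineIndependent_edgeVector hs 0).affineSpan_eq_top_iff_card_eq_finrank_add_one,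
      hs.finrank_vectorSpan (Fintype.card_fin _), Fintype.card_fin]
  · exact ((Set.finite_range _).isCompact_convexHull _).measure_lt_top.ne

theorem simplexMass_update (hs : AffineIndependent ℝ s) {t p q : Euc n} {i : Fin (k + 1)}
    (hp : ‖p‖ = 1) (hq : ‖q‖ = 1) (hps : ∀ u ∈ vectorSpan ℝ (Set.range s), ⟪p, u⟫ = 0)
    (hqs : ∀ j ≠ i, ⟪q, s j - t⟫ = 0)
    (hp_mem : p ∈ vectorSpan ℝ (Set.range s) ⊔ ℝ ∙ (t - s i))
    (hq_mem : q ∈ vectorSpan ℝ (Set.range s) ⊔ ℝ ∙ (t - s i))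
    (hpv : ⟪p, t - s i⟫ ≠ 0) (hqv : ⟪q, t - s i⟫ ≠ 0) :
    simplexMass (update s i t) = |⟪p, t - s i⟫ / ⟪q, t - s i⟫| * simplexMass s := by
  have hupdate : (fun j => t + (obliqueProjection q (t - s i) ∘ₗ
      (vectorSpan ℝ (Set.range s)).subtype) (edgeVector s i j)) = update s i t := by
    funext j
    simp only [edgeVector, LinearMap.comp_apply, Submodule.subtype_apply]
    obtain rfl | hj := eq_or_ne j i
    · rw [sub_self, map_zero, add_zero, update_self]
    · rw [update_of_ne hj, ← sub_add_sub_cancel (s j) t (s i), map_add, obliqueProjection_self hqv,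
        obliqueProjection_eq_self (hqs j hj), add_zero, add_sub_cancel]
  have hmeasure := hausdorffMeasure_simplexSet_add_apply t
    (obliqueProjection q (t - s i) ∘ₗ (vectorSpan ℝ (Set.range s)).subtype) (edgeVector s i)
  rw [hupdate, normDet_obliqueProjection hp hq hps hp_mem hq_mem hpv hqv,
    ← hausdorffMeasure_simplexSet hs, hs.finrank_vectorSpan (Fintype.card_fin _)] at hmeasure
  rw [simplexMass, hmeasure, ENNReal.toReal_mul, ENNReal.toReal_ofReal (abs_nonneg _), simplexMass]

end SimplexMass

section Conormal

open Function

variable {n : ℕ}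

theorem bary_mem_affineSpan {ι : Type*} [Fintype ι] [Nonempty ι] (b : ι → Euc n) :
    bary b ∈ affineSpan ℝ (Set.range b) := by
  have hcentroid := centroid_mem_affineSpan_of_nonempty ℝ b Finset.univ_nonempty
  rw [Finset.centroid_def, Finset.affineCombination_eq_linear_combination _ _ _
    (Finset.sum_centroidWeights_eq_one_of_nonempty ℝ _ Finset.univ_nonempty),
    Finset.centroidWeights_eq_const] at hcentroid
  simpa only [bary, const_apply, ← Finset.smul_sum, Finset.card_univ] using hcentroid

theorem exists_unit_normal_inner_neg {E : Type*} [NormedAddCommGroup E] [InnerProductSpace ℝ E]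
    {U : Submodule ℝ E} [U.HasOrthogonalProjection] {x : E} (hx : x ∉ U) :
    ∃ v ∈ U ⊔ ℝ ∙ x, ‖v‖ = 1 ∧ (∀ u ∈ U, ⟪v, u⟫ = 0) ∧ ⟪v, x⟫ < 0 := by
  set r : E := U.starProjection x - x with hr
  have hr₀ : r ≠ 0 := fun h =>
    hx (U.starProjection_eq_self_iff.1 (sub_eq_zero.1 h))
  have hrU (u : E) (hu : u ∈ U) : ⟪r, u⟫ = 0 := by
    rw [hr, ← neg_sub, inner_neg_left, U.starProjection_inner_eq_zero x u hu, neg_zero]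
  have hrx : ⟪r, x⟫ = -‖r‖ ^ 2 := by
    rw [← real_inner_self_eq_norm_sq, ← sub_sub_cancel (U.starProjection x) x, inner_sub_right,
      hrU _ (U.starProjection_apply_mem x), zero_sub]
  refine ⟨‖r‖⁻¹ • r, ?_, norm_smul_inv_norm hr₀, fun u hu => ?_, ?_⟩
  · exact Submodule.smul_mem _ _ (Submodule.sub_mem _
      (Submodule.mem_sup_left (U.starProjection_apply_mem x))
      (Submodule.mem_sup_right (Submodule.mem_span_singleton_self x)))
  · rw [inner_smul_left, hrU u hu, mul_zero]
  · rw [inner_smul_left, hrx]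
    exact mul_neg_of_pos_of_neg (inv_pos.2 (norm_pos_iff.2 hr₀))
      (neg_neg_of_pos (pow_pos (norm_pos_iff.2 hr₀) 2))

variable {K : ℕ} {b : Fin K → Euc n} {i j l : Fin K}

theorem range_face (b : Fin K → Euc n) (i : Fin K) : Set.range (face b i) = b '' {j | j ≠ i} :=
  Set.image_eq_range b {j | j ≠ i} |>.symm

theorem sub_mem_vectorSpan_face (b : Fin K → Euc n) (hj : j ≠ i) (hl : l ≠ i) :
    b j - b l ∈ vectorSpan ℝ (Set.range (face b i)) :=
  vsub_mem_vectorSpan ℝ ⟨⟨j, hj⟩, rfl⟩ ⟨⟨l, hl⟩, rfl⟩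

theorem bary_face_sub_mem_vectorSpan (b : Fin K → Euc n) (hj : j ≠ i) :
    bary (face b i) - b j ∈ vectorSpan ℝ (Set.range (face b i)) := by
  have : Nonempty {j // j ≠ i} := ⟨⟨j, hj⟩⟩
  rw [← direction_affineSpan]
  exact AffineSubspace.vsub_mem_direction (bary_mem_affineSpan _)
    (mem_affineSpan ℝ ⟨⟨j, hj⟩, rfl⟩)

theorem exists_isConormal (hb : AffineIndependent ℝ b) (hji : j ≠ i) :
    ∃ v, IsConormal b i v := by
  have : Nonempty {j // j ≠ i} := ⟨⟨j, hji⟩⟩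
  have hbary := bary_mem_affineSpan (face b i)
  have hnotMem : b i - bary (face b i) ∉ vectorSpan ℝ (Set.range (face b i)) := by
    rw [← direction_affineSpan, ← vsub_eq_sub,
      AffineSubspace.vsub_right_mem_direction_iff_mem hbary, range_face]
    simpa using hb.notMem_affineSpan_sdiff i {j | j ≠ i}
  obtain ⟨v, hv, hnorm, hface, hneg⟩ := exists_unit_normal_inner_neg hnotMem
  have hle : vectorSpan ℝ (Set.range (face b i)) ≤ vectorSpan ℝ (Set.range b) :=
    vectorSpan_mono ℝ (Set.range_comp_subset_range _ _)
  refine ⟨v, ?_, hnorm, hface, hneg⟩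
  refine sup_le hle ?_ hv
  rw [Submodule.span_singleton_le_iff_mem, ← sub_sub_sub_cancel_right _ _ (b j)]
  exact Submodule.sub_mem _ (vsub_mem_vectorSpan ℝ (Set.mem_range_self i) (Set.mem_range_self j))
    (hle (bary_face_sub_mem_vectorSpan b hji))

theorem isConormal_conormal (hb : AffineIndependent ℝ b) (hji : j ≠ i) :
    IsConormal b i (conormal b i) := by
  have hexists := exists_isConormal hb hji
  rw [conormal, dif_pos hexists]
  exact hexists.choose_spec

theorem IsConormal.inner_sub_eq_zero {v : Euc n} (hv : IsConormal b i v) (hj : j ≠ i) (hl : l ≠ i) :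
    ⟪v, b j - b l⟫ = 0 :=
  hv.2.2.1 _ (sub_mem_vectorSpan_face b hj hl)

theorem IsConormal.inner_sub_neg {v : Euc n} (hv : IsConormal b i v) (hj : j ≠ i) :
    ⟪v, b i - b j⟫ < 0 := by
  rw [← sub_add_sub_cancel _ (bary (face b i)), inner_add_right,
    hv.2.2.1 _ (bary_face_sub_mem_vectorSpan b hj), add_zero]
  exact hv.2.2.2

end Conormal

section SlideBeam

open Function

variable {n k : ℕ} {s : Fin (k + 1) → Euc n} {t : Euc n}

theorem range_face_cons_zero (s : Fin (k + 1) → Euc n) (t : Euc n) :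
    Set.range (face (Fin.cons t s : Fin (k + 2) → Euc n) 0) = Set.range s := by
  ext y
  simp [range_face, Fin.exists_fin_succ]

theorem range_face_cons_succ (s : Fin (k + 1) → Euc n) (t : Euc n) (i : Fin (k + 1)) :
    Set.range (face (Fin.cons t s : Fin (k + 2) → Euc n) i.succ) = Set.range (update s i t) := by
  ext y
  simp [range_face, Fin.exists_fin_succ, exists_update_iff s fun _ x => x = y,
    (Fin.succ_ne_zero i).symm]

theorem vectorSpan_range_cons_le (s : Fin (k + 1) → Euc n) (t : Euc n) (i : Fin (k + 1)) :
    vectorSpan ℝ (Set.range (Fin.cons t s : Fin (k + 2) → Euc n)) ≤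
      vectorSpan ℝ (Set.range s) ⊔ ℝ ∙ (t - s i) := by
  rw [vectorSpan_range_eq_span_range_vsub_right ℝ _ i.succ, Submodule.span_le, Set.range_subset_iff]
  refine Fin.cases ?_ fun j => ?_
  · exact Submodule.mem_sup_right (Submodule.mem_span_singleton_self _)
  · exact Submodule.mem_sup_left
      (vsub_mem_vectorSpan ℝ (Set.mem_range_self j) (Set.mem_range_self i))

theorem inner_conormal_cons_zero_neg
    (hts : AffineIndependent ℝ (Fin.cons t s : Fin (k + 2) → Euc n)) (i : Fin (k + 1)) :
    ⟪conormal (Fin.cons t s : Fin (k + 2) → Euc n) 0, t - s i⟫ < 0 := by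
  simpa only [Fin.cons_zero, Fin.cons_succ] using
    (isConormal_conormal hts (Fin.succ_ne_zero i)).inner_sub_neg (Fin.succ_ne_zero i)

theorem inner_conormal_cons_succ_pos
    (hts : AffineIndependent ℝ (Fin.cons t s : Fin (k + 2) → Euc n)) (i : Fin (k + 1)) :
    0 < ⟪conormal (Fin.cons t s : Fin (k + 2) → Euc n) i.succ, t - s i⟫ := by
  have hneg := (isConormal_conormal hts (Fin.succ_ne_zero i).symm).inner_sub_neg
    (Fin.succ_ne_zero i).symm
  rwa [Fin.cons_zero, Fin.cons_succ, ← neg_sub, inner_neg_right, neg_neg_iff_pos] at hneg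

theorem inner_conormal_cons_succ_eq_zero
    (hts : AffineIndependent ℝ (Fin.cons t s : Fin (k + 2) → Euc n)) {i j : Fin (k + 1)}
    (hj : j ≠ i) : ⟪conormal (Fin.cons t s : Fin (k + 2) → Euc n) i.succ, t - s j⟫ = 0 := by
  simpa only [Fin.cons_zero, Fin.cons_succ] using
    (isConormal_conormal hts (Fin.succ_ne_zero i).symm).inner_sub_eq_zero
      (Fin.succ_ne_zero i).symm ((Fin.succ_injective _).ne hj)

theorem simplexMass_update_mul_inner_conormal
    (hts : AffineIndependent ℝ (Fin.cons t s : Fin (k + 2) → Euc n)) (i : Fin (k + 1)) :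
    simplexMass (update s i t) * ⟪conormal (Fin.cons t s : Fin (k + 2) → Euc n) i.succ, t - s i⟫ =
      -(simplexMass s * ⟪conormal (Fin.cons t s : Fin (k + 2) → Euc n) 0, t - s i⟫) := by
  have hp := isConormal_conormal hts (Fin.succ_ne_zero i)
  have hq := isConormal_conormal hts (Fin.succ_ne_zero i).symm
  have hpv := inner_conormal_cons_zero_neg hts i
  have hqv := inner_conormal_cons_succ_pos hts i
  have hps := hp.2.2.1
  rw [range_face_cons_zero] at hps
  have hqs (j : Fin (k + 1)) (hj : j ≠ i) :
      ⟪conormal (Fin.cons t s : Fin (k + 2) → Euc n) i.succ, s j - t⟫ = 0 := by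
    rw [← neg_sub, inner_neg_right, inner_conormal_cons_succ_eq_zero hts hj, neg_zero]
  rw [simplexMass_update (affineIndependent_of_cons hts) hp.2.1 hq.2.1 hps hqs
    (vectorSpan_range_cons_le s t i hp.1) (vectorSpan_range_cons_le s t i hq.1) hpv.ne hqv.ne',
    abs_of_neg (div_neg_of_neg_of_pos hpv hqv)]
  field

theorem matVec_smul_rankOne (c : ℝ) (v x : Euc n) :
    matVec (c • rankOne v) x = (c * ⟪x, v⟫) • v := by
  ext p
  simp only [matVec, rankOne, Matrix.toLpLin_apply, Matrix.mulVec, dotProduct, Matrix.smul_apply,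
    Matrix.of_apply, PiLp.inner_apply, PiLp.smul_apply, smul_eq_mul, Finset.mul_sum,
    Finset.sum_mul, RCLike.inner_apply, conj_trivial]
  exact Finset.sum_congr rfl fun q _ => by ring

/-- The proportion of the simplex `s` contained in `S`, with respect to `H^k`. -/
def massFraction (s : Fin (k + 1) → Euc n) (S : Set (Euc n)) : ℝ :=
  (μH[(k : ℝ)] (S ∩ simplexSet s)).toReal / simplexMass s

theorem beam_cons (hts : AffineIndependent ℝ (Fin.cons t s : Fin (k + 2) → Euc n))
    (i : Fin (k + 1)) :
    beam ((simplexMass s * ⟪conormal (Fin.cons t s : Fin (k + 2) → Euc n) 0, t - s i⟫)⁻¹ •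
      rankOne (t - s i)) (Fin.cons t s : Fin (k + 2) → Euc n) =
    fun S => massFraction s S • (t - s i) - massFraction (update s i t) S • (t - s i) := by
  have hmass := simplexMass_update_mul_inner_conormal hts i
  have hp := inner_conormal_cons_zero_neg hts i
  have hq := inner_conormal_cons_succ_pos hts i
  have hcoeff : (simplexMass s * ⟪conormal (Fin.cons t s : Fin (k + 2) → Euc n) 0, t - s i⟫)⁻¹ *
      ⟪conormal (Fin.cons t s : Fin (k + 2) → Euc n) i.succ, t - s i⟫ =
        -(simplexMass (update s i t))⁻¹ := by
    rw [neg_eq_iff_eq_neg.1 hmass.symm, inv_neg, mul_inv, neg_mul, inv_mul_cancel_right₀ hq.ne']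
  have hdim : ((k + 2 : ℕ) : ℝ) - 2 = k := by push_cast; ring
  funext S
  simp only [beam, hdim, matVec_smul_rankOne]
  rw [Fin.sum_univ_succ, Finset.sum_eq_single i]
  · rw [hcoeff, mul_inv, inv_mul_cancel_right₀ hp.ne]
    simp only [massFraction, simplexSet, range_face_cons_zero, range_face_cons_succ, div_eq_mul_inv,
      mul_smul, neg_smul, smul_neg, sub_eq_add_neg]
  · intro j _ hj
    rw [inner_conormal_cons_succ_eq_zero hts hj.symm, mul_zero, zero_smul, smul_zero]
  · exact fun h => absurd (Finset.mem_univ i) h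

end SlideBeam

section Loads

open Function

variable {n k : ℕ}

theorem matVec_smul (c : ℝ) (A : Matrix (Fin n) (Fin n) ℝ) (v : Euc n) :
    matVec (c • A) v = c • matVec A v := by
  simp [matVec]

theorem toEuclideanLin_wedge (v w u : Euc n) :
    Matrix.toEuclideanLin (wedge v w) u = ⟪w, u⟫ • v - ⟪v, u⟫ • w := by
  ext p
  simp only [wedge, Matrix.toLpLin_apply, Matrix.mulVec, dotProduct, Matrix.of_apply,
    PiLp.inner_apply, PiLp.sub_apply, PiLp.smul_apply, smul_eq_mul, Finset.sum_mul,
    RCLike.inner_apply, conj_trivial, ← Finset.sum_sub_distrib]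
  exact Finset.sum_congr rfl fun q _ => by ring

theorem wedge_add (u v w : Euc n) : wedge u (v + w) = wedge u v + wedge u w := by
  ext p q
  simp only [wedge, Matrix.of_apply, Matrix.add_apply, PiLp.add_apply]
  ring

theorem wedge_smul (u : Euc n) (c : ℝ) (v : Euc n) : wedge u (c • v) = c • wedge u v := by
  ext p q
  simp only [wedge, Matrix.of_apply, Matrix.smul_apply, PiLp.smul_apply, smul_eq_mul]
  ring

theorem wedge_add_smul_self (u : Euc n) (c : ℝ) (v : Euc n) :
    wedge (u + c • v) v = wedge u v := by
  ext p q
  simp only [wedge, Matrix.of_apply, PiLp.add_apply, PiLp.smul_apply, smul_eq_mul]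
  ring

theorem bary_update {ι : Type*} [Fintype ι] [DecidableEq ι] (s : ι → Euc n) (i : ι) (t : Euc n) :
    bary (update s i t) = bary s + (Fintype.card ι : ℝ)⁻¹ • (t - s i) := by
  rw [bary, bary, Finset.sum_update_of_mem (Finset.mem_univ i), ← smul_add,
    Finset.sum_eq_add_sum_sdiff_singleton_of_mem (Finset.mem_univ i) s]
  congr 1
  abel

theorem bary_comp_perm {ι : Type*} [Fintype ι] (s : ι → Euc n) (σ : Equiv.Perm ι) :
    bary (s ∘ σ) = bary s := by
  rw [bary, bary, ← Equiv.sum_comp σ s]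
  rfl

theorem simplexSet_comp_perm {ι : Type*} (s : ι → Euc n) (σ : Equiv.Perm ι) :
    simplexSet (s ∘ σ) = simplexSet s := by
  rw [simplexSet, simplexSet, σ.surjective.range_comp]

theorem simplexSet_subset_iff {ι : Type*} {s : ι → Euc n} {H : Submodule ℝ (Euc n)} :
    simplexSet s ⊆ H ↔ ∀ i, s i ∈ H := by
  rw [simplexSet, H.convex.convexHull_subset_iff, Set.range_subset_iff]
  rfl

variable (n) in
/-- A vector measure on `ℝⁿ`, encoded as a set function, together with its net force and its net
torque. -/
abbrev Load : Type := (Set (Euc n) → Euc n) × Euc n × Matrix (Fin n) (Fin n) ℝ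

/-- The total force `v`, uniformly distributed over the simplex `s`. -/
def uniformLoad (s : Fin (k + 1) → Euc n) : Euc n →ₗ[ℝ] Load n where
  toFun v := (fun S => massFraction s S • v, v, wedge (bary s) v)
  map_add' v w := by
    simp only [smul_add, wedge_add]
    rfl
  map_smul' c v := by
    simp only [smul_comm _ c, wedge_smul]
    rfl

theorem uniformLoad_comp_perm (s : Fin (k + 1) → Euc n) (σ : Equiv.Perm (Fin (k + 1))) :
    uniformLoad (s ∘ σ) = uniformLoad s := by
  simp only [uniformLoad, massFraction, simplexMass, simplexSet_comp_perm, bary_comp_perm]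

theorem uniformLoad_sub_uniformLoad_update {s : Fin (k + 1) → Euc n} {t : Euc n}
    (hts : AffineIndependent ℝ (Fin.cons t s : Fin (k + 2) → Euc n)) (i : Fin (k + 1)) :
    uniformLoad s (t - s i) - uniformLoad (update s i t) (t - s i) =
      (beam ((simplexMass s * ⟪conormal (Fin.cons t s : Fin (k + 2) → Euc n) 0, t - s i⟫)⁻¹ •
        rankOne (t - s i)) (Fin.cons t s : Fin (k + 2) → Euc n), 0, 0) := by
  rw [beam_cons hts i]
  refine Prod.ext rfl (Prod.ext (sub_self _) ?_)
  change wedge (bary s) (t - s i) - wedge (bary (update s i t)) (t - s i) = 0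
  rw [bary_update, wedge_add_smul_self, sub_self]

theorem sum_simplexMass_smul_uniformLoad {l : ℕ} {s : Fin l → Fin (k + 1) → Euc n}
    (hs : ∀ i, AffineIndependent ℝ (s i)) (F : Fin l → Euc n) :
    ∑ i, simplexMass (s i) • uniformLoad (s i) (F i) =
      (sys (k : ℝ) s F, ∑ i, simplexMass (s i) • F i,
        ∑ i, simplexMass (s i) • wedge (bary (s i)) (F i)) := by
  refine Prod.ext (funext fun S => ?_) (Prod.ext ?_ ?_)
  · simp only [Prod.fst_sum, Prod.smul_fst, Finset.sum_apply, Pi.smul_apply, sys]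
    refine Finset.sum_congr rfl fun i _ => ?_
    rw [uniformLoad, LinearMap.coe_mk, AddHom.coe_mk, smul_smul, massFraction,
      mul_div_cancel₀ _ (simplexMass_pos (hs i)).ne']
  · simp only [Prod.snd_sum, Prod.fst_sum, Prod.smul_snd, Prod.smul_fst]
    rfl
  · simp only [Prod.snd_sum, Prod.smul_snd]
    rfl

end Loads

section Decomposition

open Function

variable {n k : ℕ} {H : Submodule ℝ (Euc n)}

variable (n) in
/-- The vector measures spanned by the beams over simplices with `K` vertices, with symmetric
structural coefficient matrices. -/
def beamSpan (K : ℕ) : Submodule ℝ (Set (Euc n) → Euc n) :=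
  Submodule.span ℝ {B | ∃ (τ : Fin K → Euc n) (A : Matrix (Fin n) (Fin n) ℝ),
    AffineIndependent ℝ τ ∧ A.IsSymm ∧ Structural A τ ∧ beam A τ = B}

theorem smul_beam {K : ℕ} (c : ℝ) (A : Matrix (Fin n) (Fin n) ℝ) (τ : Fin K → Euc n) :
    beam (c • A) τ = c • beam A τ := by
  funext S
  simp only [beam, matVec_smul, Pi.smul_apply, Finset.smul_sum, smul_comm c]

theorem isBeamSum_of_mem_beamSpan {K : ℕ} {B : Set (Euc n) → Euc n} (hB : B ∈ beamSpan n K) :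
    IsBeamSum K B := by
  obtain ⟨m, c, G, rfl⟩ := Submodule.mem_span_set'.1 hB
  choose τ A hτ hsymm hstructural hbeam using fun j => (G j).2
  refine ⟨m, τ, fun j => c j • A j, hτ, fun j => (hsymm j).smul _, fun j v => ?_,
    funext fun S => ?_⟩
  · rw [matVec_smul]
    exact Submodule.smul_mem _ _ (hstructural j v)
  · simp only [← hbeam, smul_beam, Finset.sum_apply]

theorem beam_smul_rankOne_mem_beamSpan {K : ℕ} {τ : Fin K → Euc n} (hτ : AffineIndependent ℝ τ)
    (c : ℝ) {v : Euc n} (hv : v ∈ vectorSpan ℝ (Set.range τ)) :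
    beam (c • rankOne v) τ ∈ beamSpan n K := by
  refine Submodule.subset_span ⟨τ, _, hτ, ?_, fun x => ?_, rfl⟩
  · exact Matrix.IsSymm.smul (Matrix.IsSymm.ext fun p q => mul_comm _ _) c
  · rw [matVec_smul_rankOne]
    exact Submodule.smul_mem _ _ hv

variable (k H) in
/-- The loads spanned by the uniform loads over `k`-simplices in `H` with force in `H`. -/
def planarLoads : Submodule ℝ (Load n) :=
  Submodule.span ℝ {L | ∃ (s : Fin (k + 1) → Euc n) (v : Euc n),
    IsSimplexIn H s ∧ v ∈ H ∧ uniformLoad s v = L}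

theorem exists_eq_sum_of_mem_planarLoads {L : Load n} (hL : L ∈ planarLoads k H) :
    ∃ (l : ℕ) (s : Fin l → Fin (k + 1) → Euc n) (F : Fin l → Euc n),
      (∀ i, IsSimplexIn H (s i)) ∧ (∀ i, F i ∈ H) ∧
        L = ∑ i, simplexMass (s i) • uniformLoad (s i) (F i) := by
  obtain ⟨l, c, G, rfl⟩ := Submodule.mem_span_set'.1 hL
  choose s v hs hv hload using fun i => (G i).2
  refine ⟨l, s, fun i => (simplexMass (s i))⁻¹ • c i • v i, hs,
    fun i => H.smul_mem _ (H.smul_mem _ (hv i)), Finset.sum_congr rfl fun i _ => ?_⟩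
  rw [← map_smul, smul_inv_smul₀ (simplexMass_pos (hs i).affineIndependent).ne', map_smul, hload]

variable (k H) in
/-- The sums of beams over `(k + 1)`-simplices, which exert no net force and no net torque, and of
loads in `H`. -/
def decomposableLoads : Submodule ℝ (Load n) :=
  (beamSpan n (k + 2)).map (LinearMap.inl ℝ _ _) ⊔ planarLoads k H

variable (k H) in
theorem isLoadClass_mkQ_comp_uniformLoad :
    IsLoadClass H fun s : Fin (k + 1) → Euc n =>
      (decomposableLoads k H).mkQ ∘ₗ uniformLoad s where
  comp_perm s σ := by rw [uniformLoad_comp_perm]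
  slide s t i hts := by
    rw [LinearMap.comp_apply, LinearMap.comp_apply, ← sub_eq_zero, ← map_sub,
      uniformLoad_sub_uniformLoad_update hts, Submodule.mkQ_apply, Submodule.Quotient.mk_eq_zero]
    exact Submodule.mem_sup_left (Submodule.mem_map_of_mem (beam_smul_rankOne_mem_beamSpan hts _
      (vsub_mem_vectorSpan ℝ ⟨0, rfl⟩ ⟨i.succ, rfl⟩)))
  apply_eq_zero s v hs hv := by
    rw [LinearMap.comp_apply, Submodule.mkQ_apply, Submodule.Quotient.mk_eq_zero]
    exact Submodule.mem_sup_right (Submodule.subset_span ⟨s, v, hs, hv, rfl⟩)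

theorem inner_bary_eq_zero {ι : Type*} [Fintype ι] {s : ι → Euc n} {u : Euc n}
    (hs : ∀ i, ⟪s i, u⟫ = 0) : ⟪bary s, u⟫ = 0 := by
  simp only [bary, inner_smul_left, sum_inner, hs, Finset.sum_const_zero, mul_zero]

variable {l : ℕ} {s : Fin l → Fin (k + 1) → Euc n} {F : Fin l → Euc n}

theorem equil_iff : equil (k : ℝ) s F ↔ ∑ i, simplexMass (s i) • F i = 0 ∧
    ∑ i, simplexMass (s i) • wedge (bary (s i)) (F i) = 0 :=
  Iff.rfl

theorem sum_simplexMass_mul_inner_eq_zero (hequil : equil (k : ℝ) s F) (u : Euc n) :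
    ∑ a, simplexMass (s a) * ⟪F a, u⟫ = 0 := by
  simpa only [sum_inner, real_inner_smul_left, inner_zero_left] using
    congrArg (fun x => ⟪x, u⟫) (equil_iff.1 hequil).1

theorem sum_simplexMass_mul_inner_smul_sum_eq_zero (hequil : equil (k : ℝ) s F) {u : Euc n}
    (hu : ∀ a i, ⟪s a i, u⟫ = 0) :
    ∑ a, (simplexMass (s a) * ⟪F a, u⟫) • ∑ i, s a i = 0 := by
  have hbary : ∑ a, (simplexMass (s a) * ⟪F a, u⟫) • bary (s a) = 0 := by
    have htorque := congrArg (fun A => Matrix.toEuclideanLin A u) (equil_iff.1 hequil).2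
    simpa only [map_sum, map_smul, LinearMap.sum_apply, LinearMap.smul_apply, map_zero,
      LinearMap.zero_apply, toEuclideanLin_wedge, inner_bary_eq_zero (hu _), zero_smul, sub_zero,
      smul_smul] using htorque
  simp only [bary, smul_comm _ ((Fintype.card (Fin (k + 1)) : ℝ)⁻¹), ← Finset.smul_sum] at hbary
  exact (smul_eq_zero_iff_right (by positivity)).1 hbary

theorem sum_simplexMass_smul_uniformLoad_mem (hs : ∀ a, IsSimplexIn H (s a))
    (hequil : equil (k : ℝ) s F) :
    ∑ a, simplexMass (s a) • uniformLoad (s a) (F a) ∈ decomposableLoads k H := by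
  have hE := isLoadClass_mkQ_comp_uniformLoad k H
  set E := fun s : Fin (k + 1) → Euc n => (decomposableLoads k H).mkQ ∘ₗ uniformLoad s
  let b := stdOrthonormalBasis ℝ Hᗮ
  have hsplit (a : Fin l) : E (s a) (F a) = ∑ j, ⟪F a, b j⟫ • E (s a) (b j) := by
    have hF := H.starProjection_add_starProjection_orthogonal (F a)
    rw [← hF, map_add, hE.apply_eq_zero _ _ (hs a) (H.starProjection_apply_mem _), zero_add, hF,
      b.starProjection_eq_sum_rankOne]
    simp [real_inner_comm]
  rw [← Submodule.Quotient.mk_eq_zero, ← Submodule.mkQ_apply, map_sum]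
  calc ∑ a, (decomposableLoads k H).mkQ (simplexMass (s a) • uniformLoad (s a) (F a))
    _ = ∑ a, simplexMass (s a) • E (s a) (F a) := by simp only [map_smul]; rfl
    _ = ∑ j, ∑ a, (simplexMass (s a) * ⟪F a, b j⟫) • E (s a) (b j) := by
      simp only [hsplit, Finset.smul_sum, smul_smul]
      exact Finset.sum_comm
    _ = 0 := Finset.sum_eq_zero fun j _ => hE.sum_smul_apply_eq_zero hs
      (sum_simplexMass_mul_inner_eq_zero hequil _)
      (sum_simplexMass_mul_inner_smul_sum_eq_zero hequil fun a i =>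
        Submodule.inner_right_of_mem_orthogonal ((hs a).mem i) (b j).2)

end Decomposition

theorem statement6_general {k n l : ℕ} (H : Submodule ℝ (Euc n)) (s : Fin l → Fin (k + 1) → Euc n)
    (hs : ∀ i, AffineIndependent ℝ (s i)) (hplane : ∀ i, simplexSet (s i) ⊆ H)
    (F : Fin l → Euc n) (hequil : equil (k : ℝ) s F) :
    ∃ (B : Set (Euc n) → Euc n), IsBeamSum (k + 2) B ∧
      ∃ (l₂ : ℕ) (s₂ : Fin l₂ → Fin (k + 1) → Euc n) (F₂ : Fin l₂ → Euc n),
        (∀ i, AffineIndependent ℝ (s₂ i)) ∧ (∀ i, simplexSet (s₂ i) ⊆ H) ∧ (∀ i, F₂ i ∈ H) ∧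
        equil (k : ℝ) s₂ F₂ ∧ sys (k : ℝ) s F = fun S => B S + sys (k : ℝ) s₂ F₂ S := by
  have hsH (i : Fin l) : IsSimplexIn H (s i) := ⟨hs i, simplexSet_subset_iff.1 (hplane i)⟩
  obtain ⟨_, ⟨B, hB, rfl⟩, _, hL, hsum⟩ :=
    Submodule.mem_sup.1 (sum_simplexMass_smul_uniformLoad_mem hsH hequil)
  obtain ⟨l₂, s₂, F₂, hs₂, hF₂, rfl⟩ := exists_eq_sum_of_mem_planarLoads hL
  rw [sum_simplexMass_smul_uniformLoad hs,
    sum_simplexMass_smul_uniformLoad fun i => (hs₂ i).affineIndependent, LinearMap.inl_apply,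
    Prod.mk_add_mk, zero_add, Prod.mk.injEq, Prod.mk.injEq] at hsum
  obtain ⟨hsys, hforce, htorque⟩ := hsum
  exact ⟨B, isBeamSum_of_mem_beamSpan hB, l₂, s₂, F₂, fun i => (hs₂ i).affineIndependent,
    fun i => simplexSet_subset_iff.2 (hs₂ i).mem, hF₂,
    equil_iff.2 (hforce ▸ htorque ▸ equil_iff.1 hequil), hsys.symm⟩

/-- (Proposition 2.)  With `k = k' + 1 ≥ 1` and `n ≥ k + 2`, an
equilibrium system of arbitrary forces on `(k−1)`-simplices lying in the hyperplane
`{x : ⟪x, eₙ⟫ = 0}` splits as `F = B + Fʰ`, with `B` a finite sum of `k`-beams and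
`Fʰ` an equilibrium system whose simplices and forces all lie in the hyperplane. -/
theorem statement6 {k' n l : ℕ} (hn : k' + 3 ≤ n)
    (en : Euc n) (hen : en = EuclideanSpace.single (⟨n - 1, by omega⟩ : Fin n) 1)
    (s : Fin l → Fin (k' + 1) → Euc n) (hs : ∀ i, AffineIndependent ℝ (s i))
    (hplane : ∀ i, simplexSet (s i) ⊆ {x : Euc n | ⟪x, en⟫ = 0})
    (F : Fin l → Euc n)
    (hequil : equil (k' : ℝ) s F) :
    ∃ (B : Set (Euc n) → Euc n), IsBeamSum (k' + 2) B ∧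
      ∃ (l₂ : ℕ) (s₂ : Fin l₂ → Fin (k' + 1) → Euc n) (F₂ : Fin l₂ → Euc n),
        (∀ i, AffineIndependent ℝ (s₂ i)) ∧
        (∀ i, simplexSet (s₂ i) ⊆ {x : Euc n | ⟪x, en⟫ = 0}) ∧
        (∀ i, ⟪F₂ i, en⟫ = 0) ∧
        equil (k' : ℝ) s₂ F₂ ∧
        sys (k' : ℝ) s F = fun S => B S + sys (k' : ℝ) s₂ F₂ S := by
  have hH : ((ℝ ∙ en)ᗮ : Set (Euc n)) = {x | ⟪x, en⟫ = 0} :=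
    Set.ext fun _ => Submodule.mem_orthogonal_singleton_iff_inner_left
  simpa only [hH, Submodule.mem_orthogonal_singleton_iff_inner_left] using
    statement6_general (ℝ ∙ en)ᗮ s hs (hH ▸ hplane) F hequil

end
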